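/- Let q ≥ 4, let B be a Baer subplane of PG(2,q²) secant to ℓ∞ and C an F_q-conic contained in B with C ∩ ℓ∞ = ∅, and suppose the unique F_{q²}-conic C⁺ containing C meets ℓ∞ in two distinct points P̄, Q̄. Let α be a plane of PG(4,q) not contained in Σ∞ whose affine points are exactly the φ-images of the affine points of B. Then P̄, Q̄ ∉ B, φ(C) is a nondegenerate conic contained in α that is disjoint from Σ∞, and the extension of φ(C) to PG(4,q²) meets each of the lines PQ^q and P^qQ in exactly one point, where P, Q are the points of the transversal g corresponding to P̄, Q̄. -/

import Mathlib

open scoped Classical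
open Matrix

noncomputable section

namespace BaerConics

/-- Points of the projective space `PG(n-1, K)` as projectivization of `Fin n → K`. -/
abbrev PP (K : Type) [Field K] (n : ℕ) : Type := Projectivization K (Fin n → K)

variable {K : Type} [Field K] {m n : ℕ}

/-- The (at most one) projective point determined by a vector:  empty if `v = 0`,
and the singleton `{[v]}` otherwise. -/
def projPt (v : Fin n → K) : Set (PP K n) :=
  {p | ∃ h : v ≠ 0, p = Projectivization.mk K v h}

/-- The set of projective points lying in a linear subspace. -/
def ptsOf (W : Submodule K (Fin n → K)) : Set (PP K n) :=
  {p | p.rep ∈ W}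

/-- The projective line through two points (as the set of points of the span). -/
def lineTh (P Q : PP K n) : Set (PP K n) :=
  ptsOf (Submodule.span K {P.rep, Q.rep})

/-- `X` is a projective flat of projective dimension `d`. -/
def IsFlat (d : ℕ) (X : Set (PP K n)) : Prop :=
  ∃ W : Submodule K (Fin n → K), Module.finrank K W = d + 1 ∧ X = ptsOf W

/-- Image of a set of vectors under the projective map induced by a matrix. -/
def mimg (M : Matrix (Fin m) (Fin n) K) (X : Set (Fin n → K)) : Set (PP K m) :=
  {p | ∃ v ∈ X, p ∈ projPt (M.mulVec v)}

/-- Coordinatewise application of a ring homomorphism to a vector. -/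
def mapVec {L : Type} [Field L] (σ : K →+* L) (v : Fin n → K) : Fin n → L :=
  fun i => σ (v i)

lemma mulVec_inj (M : Matrix (Fin n) (Fin n) K) (hM : IsUnit M.det) :
    Function.Injective M.mulVec := by
  intro a b hab
  have h := congrArg (fun v => M⁻¹.mulVec v) hab
  simpa [Matrix.mulVec_mulVec, Matrix.nonsing_inv_mul M hM] using h

/-- The projective transformation induced by an invertible matrix. -/
def pmap (M : Matrix (Fin n) (Fin n) K) (hM : IsUnit M.det) (p : PP K n) : PP K n :=
  Projectivization.mk K (M.mulVec p.rep) (by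
    intro h
    apply p.rep_nonzero
    have h0 : M.mulVec p.rep = M.mulVec 0 := by simpa [Matrix.mulVec_zero] using h
    exact mulVec_inj M hM h0)

/-- The map induced on projective points by the coordinatewise `q`-power map. -/
def frobPt (q : ℕ) (p : PP K n) : PP K n :=
  Projectivization.mk K (fun i => p.rep i ^ q) (by
    obtain ⟨i, hi⟩ := Function.ne_iff.mp p.rep_nonzero
    intro h
    exact pow_ne_zero q (by simpa using hi) (by simpa using congrFun h i))

/-- The line at infinity `z = 0` of `PG(2, K)`. -/
def linf (K : Type) [Field K] : Set (PP K 3) := {p | p.rep 2 = 0}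

/-- Coordinatewise application of the algebra map to a vector. -/
def algVec (F : Type) {K : Type} [Field F] [Field K] [Algebra F K] {n : ℕ}
    (v : Fin n → F) : Fin n → K := fun i => algebraMap F K (v i)

/-- Vectors representing the points of the standard Baer subline of `ℓ∞`. -/
def sublineVecs (F K : Type) [Field F] [Field K] [Algebra F K] : Set (Fin 3 → K) :=
  {v | ∃ θ : F, v = ![algebraMap F K θ, 1, 0]} ∪ {![1, 0, 0]}

/-- Nonzero vectors representing the points of `ℓ∞`. -/
def linfVecs (K : Type) [Field K] : Set (Fin 3 → K) := {v | v ≠ 0 ∧ v 2 = 0}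

/-- Vectors with all coordinates in (the image of) `F`, representing the canonical
Baer subplane. -/
def subplaneVecs (F K : Type) [Field F] [Field K] [Algebra F K] : Set (Fin 3 → K) :=
  {v | ∃ w : Fin 3 → F, w ≠ 0 ∧ v = algVec F w}

/-- Vectors of the standard conic with parameters in `S`. -/
def conicVecs {K : Type} [Field K] (S : Set K) : Set (Fin 3 → K) :=
  {v | ∃ θ ∈ S, v = ![1, θ, θ ^ 2]} ∪ {![0, 0, 1]}

/-- `b` is a Baer subline of the line `ℓ` of `PG(2,q²)`. -/
def IsBaerSublineOf (F : Type) {K : Type} [Field F] [Field K] [Algebra F K]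
    (b ℓ : Set (PP K 3)) : Prop :=
  ∃ M : Matrix (Fin 3) (Fin 3) K, IsUnit M.det ∧
    ℓ = mimg M (linfVecs K) ∧ b = mimg M (sublineVecs F K)

/-- `B` is a Baer subplane of `PG(2,q²)`. -/
def IsBaerSubplane (F : Type) {K : Type} [Field F] [Field K] [Algebra F K]
    (B : Set (PP K 3)) : Prop :=
  ∃ M : Matrix (Fin 3) (Fin 3) K, IsUnit M.det ∧ B = mimg M (subplaneVecs F K)

/-- `C` is the image under `PGL(3,K)` of the standard conic with parameters in `S`. -/
def IsConicOver {K : Type} [Field K] (S : Set K) (C : Set (PP K 3)) : Prop :=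
  ∃ M : Matrix (Fin 3) (Fin 3) K, IsUnit M.det ∧ C = mimg M (conicVecs S)

/-- An `F_q`-conic of `PG(2,q²)`: a nondegenerate conic of a Baer subplane. -/
def IsFqConic (F : Type) {K : Type} [Field F] [Field K] [Algebra F K]
    (C : Set (PP K 3)) : Prop :=
  IsConicOver (Set.range (algebraMap F K)) C

/-- An `F_{q²}`-conic of `PG(2,q²)`: a nondegenerate conic. -/
def IsFq2Conic {K : Type} [Field K] (C : Set (PP K 3)) : Prop :=
  IsConicOver (Set.univ : Set K) C

/-- `𝒦` is an `ℓ∞`-Baer pencil with vertex `P`. -/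
def IsLinfBaerPencil (F : Type) {K : Type} [Field F] [Field K] [Algebra F K]
    (𝒦 : Set (PP K 3)) (P : PP K 3) : Prop :=
  P ∈ linf K ∧ ∃ ℓ b : Set (PP K 3), IsBaerSublineOf F b ℓ ∧ P ∉ ℓ ∧
    (∃! X, X ∈ b ∩ linf K) ∧ 𝒦 = ⋃ X ∈ b, lineTh P X

/-- `m` is a line of the Baer subplane `B`, with extension (full line) `ℓ`. -/
def IsLineOfExt {K : Type} [Field K] (q : ℕ) (B m ℓ : Set (PP K 3)) : Prop :=
  IsFlat 1 ℓ ∧ m = B ∩ ℓ ∧ m.ncard = q + 1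

/-- `m` is a line of the Baer subplane `B`. -/
def IsLineOf {K : Type} [Field K] (q : ℕ) (B m : Set (PP K 3)) : Prop :=
  ∃ ℓ, IsLineOfExt q B m ℓ

/-- `P` and `Q` are conjugate with respect to the Baer subline `b` of `ℓ∞`. -/
def ConjWrtSubline (F : Type) {K : Type} [Field F] [Field K] [Algebra F K]
    (q : ℕ) (b : Set (PP K 3)) (P Q : PP K 3) : Prop :=
  ∃ (M : Matrix (Fin 3) (Fin 3) K) (hM : IsUnit M.det),
    mimg M (linfVecs K) = linf K ∧ b = mimg M (sublineVecs F K) ∧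
    ∃ P₀ : PP K 3, P = pmap M hM P₀ ∧ Q = pmap M hM (frobPt q P₀)

/-- A representative vector for the point `(δ,1,0)` (resp. `(1,0,0)`) of `ℓ∞`. -/
def ptInfVec {K : Type} [Field K] : Option K → Fin 3 → K
  | some δ => ![δ, 1, 0]
  | none => ![1, 0, 0]

lemma ptInfVec_ne {K : Type} [Field K] (t : Option K) : ptInfVec t ≠ 0 := by
  cases t with
  | none => intro h; have h0 := congrFun h 0; simp [ptInfVec] at h0
  | some δ => intro h; have h0 := congrFun h 1; simp [ptInfVec] at h0

/-- The point of `ℓ∞` with parameter `δ ∈ K ∪ {∞}`. -/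
def ptInf {K : Type} [Field K] (t : Option K) : PP K 3 :=
  Projectivization.mk K (ptInfVec t) (ptInfVec_ne t)

/-- The hyperplane at infinity `z = 0` of `PG(4, F)`. -/
def sinf (F : Type) [Field F] : Set (PP F 5) := {p | p.rep 4 = 0}

/-- Affine coordinates of the Bruck-Bose image of an affine point of `PG(2,q²)`. -/
def bbVec {F K : Type} [Field F] [Field K] (c0 c1 : K → F) (p : PP K 3) : Fin 5 → F :=
  ![c0 (p.rep 0 / p.rep 2), c1 (p.rep 0 / p.rep 2),
    c0 (p.rep 1 / p.rep 2), c1 (p.rep 1 / p.rep 2), 1]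

/-- The Bruck-Bose map (meaningful on affine points of `PG(2,q²)`). -/
def bb {F K : Type} [Field F] [Field K] (c0 c1 : K → F) (p : PP K 3) : PP F 5 :=
  Projectivization.mk F (bbVec c0 c1 p) (by
    intro h
    have h4 := congrFun h 4
    simp [bbVec] at h4)

/-- First spanning vector of the spread line with parameter `δ ∈ K ∪ {∞}`. -/
def spreadV1 {F K : Type} [Field F] [Field K] (c0 c1 : K → F) : Option K → Fin 5 → F
  | some δ => ![c0 δ, c1 δ, 1, 0, 0]
  | none => ![1, 0, 0, 0, 0]

/-- Second spanning vector of the spread line with parameter `δ ∈ K ∪ {∞}`. -/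
def spreadV2 {F K : Type} [Field F] [Field K] (c0 c1 : K → F) (t0 t1 : F) :
    Option K → Fin 5 → F
  | some δ => ![t0 * c1 δ, c0 δ + t1 * c1 δ, 0, 1, 0]
  | none => ![0, 1, 0, 0, 0]

/-- The line of the regular spread `S` with parameter `δ ∈ K ∪ {∞}`. -/
def spreadLine {F K : Type} [Field F] [Field K] (c0 c1 : K → F) (t0 t1 : F)
    (t : Option K) : Set (PP F 5) :=
  ptsOf (Submodule.span F {spreadV1 c0 c1 t, spreadV2 c0 c1 t0 t1 t})

/-- The extension `[T]⋆` of a spread line to `PG(4,q²)`. -/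
def extSpreadLine (F : Type) {K : Type} [Field F] [Field K] [Algebra F K]
    (c0 c1 : K → F) (t0 t1 : F) (t : Option K) : Set (PP K 5) :=
  ptsOf (Submodule.span K
    {algVec F (spreadV1 c0 c1 t), algVec F (spreadV2 c0 c1 t0 t1 t)})

/-- The `K`-extension of an `F`-subspace. -/
def extSub (F : Type) {K : Type} [Field F] [Field K] [Algebra F K] {n : ℕ}
    (W : Submodule F (Fin n → F)) : Submodule K (Fin n → K) :=
  Submodule.span K (algVec F '' (W : Set (Fin n → F)))

def A0v {K : Type} [Field K] (τ : K) (q : ℕ) : Fin 5 → K := ![τ ^ q, -1, 0, 0, 0]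
def A1v {K : Type} [Field K] (τ : K) (q : ℕ) : Fin 5 → K := ![0, 0, τ ^ q, -1, 0]
def B0v {K : Type} [Field K] (τ : K) : Fin 5 → K := ![τ, -1, 0, 0, 0]
def B1v {K : Type} [Field K] (τ : K) : Fin 5 → K := ![0, 0, τ, -1, 0]

/-- The transversal line `g` of the regular spread, in `PG(4,q²)`. -/
def gline {K : Type} [Field K] (τ : K) (q : ℕ) : Set (PP K 5) :=
  ptsOf (Submodule.span K {A0v τ q, A1v τ q})

/-- The conjugate transversal line `g^q` of the regular spread, in `PG(4,q²)`. -/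
def gqline {K : Type} [Field K] (τ : K) : Set (PP K 5) :=
  ptsOf (Submodule.span K {B0v τ, B1v τ})

/-- Representative vector of the point `T = δA₀ + A₁` of `g`. -/
def gptVec {K : Type} [Field K] (τ : K) (q : ℕ) : Option K → Fin 5 → K
  | some δ => δ • A0v τ q + A1v τ q
  | none => A0v τ q

/-- Representative vector of the conjugate point `T^q = δ^q A₀^q + A₁^q` of `g^q`. -/
def gqptVec {K : Type} [Field K] (τ : K) (q : ℕ) : Option K → Fin 5 → K
  | some δ => δ ^ q • B0v τ + B1v τ
  | none => B0v τ

lemma gptVec_ne {K : Type} [Field K] (τ : K) (q : ℕ) (t : Option K) :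
    gptVec τ q t ≠ 0 := by
  cases t with
  | none =>
      intro h
      have := congrFun h 1
      simp [gptVec, A0v] at this
  | some δ =>
      intro h
      have := congrFun h 3
      simp [gptVec, A0v, A1v] at this

lemma gqptVec_ne {K : Type} [Field K] (τ : K) (q : ℕ) (t : Option K) :
    gqptVec τ q t ≠ 0 := by
  cases t with
  | none =>
      intro h
      have := congrFun h 1
      simp [gqptVec, B0v] at this
  | some δ =>
      intro h
      have := congrFun h 3
      simp [gqptVec, B0v, B1v] at this

/-- The point of `g` corresponding to the point of `ℓ∞` with parameter `δ ∈ K ∪ {∞}`. -/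
def gpt {K : Type} [Field K] (τ : K) (q : ℕ) (t : Option K) : PP K 5 :=
  Projectivization.mk K (gptVec τ q t) (gptVec_ne τ q t)

/-- The point of `g^q` conjugate to `gpt τ q t`. -/
def gqpt {K : Type} [Field K] (τ : K) (q : ℕ) (t : Option K) : PP K 5 :=
  Projectivization.mk K (gqptVec τ q t) (gqptVec_ne τ q t)

/-- Evaluation of the quadratic form with matrix `M` at `v`. -/
def qeval {K : Type} [Field K] {n : ℕ} (M : Matrix (Fin n) (Fin n) K) (v : Fin n → K) : K :=
  v ⬝ᵥ M.mulVec v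

/-- Vectors of the standard twisted cubic (inside the hyperplane `x₄ = 0`)
with parameters in `S`. -/
def tcVecs {K : Type} [Field K] (S : Set K) : Set (Fin 5 → K) :=
  {v | ∃ θ ∈ S, v = ![1, θ, θ ^ 2, θ ^ 3, 0]} ∪ {![0, 0, 0, 1, 0]}

/-- Vectors of the standard 4-dimensional normal rational curve with parameters in `S`. -/
def nrcVecs {K : Type} [Field K] (S : Set K) : Set (Fin 5 → K) :=
  {v | ∃ θ ∈ S, v = ![1, θ, θ ^ 2, θ ^ 3, θ ^ 4]} ∪ {![0, 0, 0, 0, 1]}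

/-- `R` is a regulus of `Σ∞` in `PG(4,q)`. -/
def IsRegulus {F : Type} [Field F] (q : ℕ) (R : Set (Set (PP F 5))) : Prop :=
  R.ncard = q + 1 ∧
  (∀ ℓ ∈ R, IsFlat 1 ℓ ∧ ℓ ⊆ sinf F) ∧
  (∀ ℓ ∈ R, ∀ ℓ' ∈ R, ℓ ≠ ℓ' → ℓ ∩ ℓ' = ∅) ∧
  (∀ mℓ : Set (PP F 5), IsFlat 1 mℓ → mℓ ⊆ sinf F →
    (∃ ℓ₁ ∈ R, ∃ ℓ₂ ∈ R, ∃ ℓ₃ ∈ R, ℓ₁ ≠ ℓ₂ ∧ ℓ₁ ≠ ℓ₃ ∧ ℓ₂ ≠ ℓ₃ ∧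
      (mℓ ∩ ℓ₁).Nonempty ∧ (mℓ ∩ ℓ₂).Nonempty ∧ (mℓ ∩ ℓ₃).Nonempty) →
    ∀ ℓ ∈ R, (mℓ ∩ ℓ).Nonempty)


/-! ### Projective bookkeeping -/

lemma mk_mem_mimg {M : Matrix (Fin m) (Fin n) K} {X : Set (Fin n → K)} {w : Fin m → K}
    (hw : w ≠ 0) :
    Projectivization.mk K w hw ∈ mimg M X ↔ ∃ v ∈ X, ∃ c : K, c ≠ 0 ∧ M.mulVec v = c • w := by
  constructor
  · rintro ⟨v, hv, h, he⟩
    rw [eq_comm, Projectivization.mk_eq_mk_iff'] at he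
    obtain ⟨a, ha⟩ := he
    refine ⟨v, hv, a, ?_, ha.symm⟩
    rintro rfl
    exact h (by simpa using ha.symm)
  · rintro ⟨v, hv, c, hc, he⟩
    have h : M.mulVec v ≠ 0 := by rw [he]; exact smul_ne_zero hc hw
    refine ⟨v, hv, h, ?_⟩
    rw [eq_comm, Projectivization.mk_eq_mk_iff']
    exact ⟨c, he.symm⟩

lemma rep_mk {w : Fin n → K} (hw : w ≠ 0) :
    ∃ c : K, c ≠ 0 ∧ (Projectivization.mk K w hw).rep = c • w := by
  obtain ⟨a, ha⟩ := Projectivization.exists_smul_eq_mk_rep K w hw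
  exact ⟨a, a.ne_zero, ha.symm⟩

lemma mem_mimg {M : Matrix (Fin m) (Fin n) K} {X : Set (Fin n → K)} {p : PP K m} :
    p ∈ mimg M X ↔ ∃ v ∈ X, ∃ c : K, c ≠ 0 ∧ M.mulVec v = c • p.rep := by
  conv_lhs => rw [← p.mk_rep]
  exact mk_mem_mimg p.rep_nonzero

lemma mk_mem_linf {w : Fin 3 → K} (hw : w ≠ 0) :
    Projectivization.mk K w hw ∈ linf K ↔ w 2 = 0 := by
  obtain ⟨c, hc, h⟩ := rep_mk hw
  simp [linf, h, hc]

lemma mk_mem_ptsOf {W : Submodule K (Fin n → K)} {w : Fin n → K} (hw : w ≠ 0) :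
    Projectivization.mk K w hw ∈ ptsOf W ↔ w ∈ W := by
  obtain ⟨c, hc, h⟩ := rep_mk hw
  simp only [ptsOf, Set.mem_ofPred_eq, h]
  exact W.smul_mem_iff hc

lemma mk_mem_lineTh {v w x : Fin n → K} (hv : v ≠ 0) (hw : w ≠ 0) (hx : x ≠ 0) :
    Projectivization.mk K x hx ∈
      lineTh (Projectivization.mk K v hv) (Projectivization.mk K w hw) ↔
    ∃ a b : K, a • v + b • w = x := by
  obtain ⟨c, hc, h⟩ := rep_mk hv
  obtain ⟨d, hd, h'⟩ := rep_mk hw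
  rw [lineTh, mk_mem_ptsOf, Submodule.mem_span_pair, h, h']
  constructor
  · rintro ⟨a, b, hab⟩
    exact ⟨a * c, b * d, by rw [← hab, smul_smul, smul_smul]⟩
  · rintro ⟨a, b, hab⟩
    exact ⟨a / c, b / d, by rw [← hab, smul_smul, smul_smul]; field_simp⟩

/-! ### Linear algebra lemmas -/

lemma conicVecs_range (F : Type) {K : Type} [Field F] [Field K] [Algebra F K] :
    conicVecs (Set.range (algebraMap F K)) = algVec F '' conicVecs (Set.univ : Set F) := by
  ext v
  constructor
  · rintro (⟨_, ⟨θ, rfl⟩, rfl⟩ | h)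
    · refine ⟨![1, θ, θ ^ 2], Or.inl ⟨θ, trivial, rfl⟩, ?_⟩
      ext i; fin_cases i <;> simp [algVec]
    · refine ⟨![0, 0, 1], Or.inr rfl, ?_⟩
      rw [Set.mem_singleton_iff.mp h]
      ext i; fin_cases i <;> simp [algVec]
  · rintro ⟨_, ⟨θ, _, rfl⟩ | h, rfl⟩
    · refine Or.inl ⟨_, ⟨θ, rfl⟩, ?_⟩
      ext i; fin_cases i <;> simp [algVec]
    · right
      rw [Set.mem_singleton_iff.mp h, Set.mem_singleton_iff]
      ext i; fin_cases i <;> simp [algVec]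

lemma conic_zero_of_form {v : Fin 3 → K} (hv : v ≠ 0) (h : v 1 ^ 2 - v 0 * v 2 = 0) :
    ∃ u ∈ conicVecs (Set.univ : Set K), ∃ c : K, c ≠ 0 ∧ v = c • u := by
  by_cases h0 : v 0 = 0
  · have h1 : v 1 = 0 := by simpa [h0] using h
    refine ⟨![0, 0, 1], Or.inr rfl, v 2, ?_, ?_⟩
    · intro h2; apply hv; ext i; fin_cases i <;> simp [h0, h1, h2]
    · ext i; fin_cases i <;> simp [h0, h1]
  · refine ⟨![1, v 1 / v 0, (v 1 / v 0) ^ 2], Or.inl ⟨_, trivial, rfl⟩, v 0, h0, ?_⟩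
    ext i; fin_cases i
    · simp
    · simp; field_simp
    · simp; field_simp; linear_combination -h

lemma form_of_conic {S : Set K} {u : Fin 3 → K} (hu : u ∈ conicVecs S) :
    u 1 ^ 2 - u 0 * u 2 = 0 := by
  rcases hu with ⟨θ, _, rfl⟩ | h
  · simp
  · rw [Set.mem_singleton_iff.mp h]; simp

lemma form_pullback {F K : Type} [Field F] [Field K] [Fintype F] [Algebra F K]
    (hq4 : 4 ≤ Fintype.card F) (H : Matrix (Fin 3) (Fin 3) K) (hH : IsUnit H.det)
    (h : ∀ v ∈ conicVecs (Set.range (algebraMap F K)),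
      H.mulVec v 1 ^ 2 - H.mulVec v 0 * H.mulVec v 2 = 0)
    (v : Fin 3 → K) (hv : H.mulVec v 1 ^ 2 - H.mulVec v 0 * H.mulVec v 2 = 0) :
    v 1 ^ 2 - v 0 * v 2 = 0 := by
  have e2 := h ![0, 0, 1] (Or.inr rfl)
  have e1 : ∀ θ : F, _ := fun θ => h ![1, algebraMap F K θ, (algebraMap F K θ) ^ 2]
    (Or.inl ⟨_, ⟨θ, rfl⟩, rfl⟩)
  simp only [mulVec, dotProduct, Fin.sum_univ_three] at e1 e2 hv
  simp only [cons_val_zero, cons_val_one, cons_val, mul_zero, mul_one, zero_add] at e1 e2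
  set k4 := H 1 2 ^ 2 - H 0 2 * H 2 2 with hk4
  set k3 := 2 * H 1 1 * H 1 2 - H 0 1 * H 2 2 - H 0 2 * H 2 1 with hk3
  set k1 := 2 * H 1 0 * H 1 1 - H 0 0 * H 2 1 - H 0 1 * H 2 0 with hk1
  set k0 := H 1 0 ^ 2 - H 0 0 * H 2 0 with hk0
  set a := 2 * H 1 0 * H 1 2 - H 0 0 * H 2 2 - H 0 2 * H 2 0 with ha
  set c := H 1 1 ^ 2 - H 0 1 * H 2 1 with hc
  have hp : (Polynomial.C k3 * Polynomial.X ^ 3 + Polynomial.C (a + c) * Polynomial.X ^ 2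
      + Polynomial.C k1 * Polynomial.X + Polynomial.C k0 : Polynomial K) = 0 := by
    apply Polynomial.eq_zero_of_natDegree_lt_card_of_eval_eq_zero _
      (algebraMap F K).injective
    · intro θ
      simp only [Polynomial.eval_add, Polynomial.eval_mul, Polynomial.eval_C,
        Polynomial.eval_pow, Polynomial.eval_X]
      linear_combination e1 θ - (algebraMap F K θ) ^ 4 * e2
    · exact lt_of_le_of_lt Polynomial.natDegree_cubic_le (by omega)
  have c3 : k3 = 0 := by simpa [Polynomial.coeff_X, Polynomial.coeff_C, -map_add] using congrArg (fun p => p.coeff 3) hp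
  have c2 : a + c = 0 := by simpa [Polynomial.coeff_X, Polynomial.coeff_C, -map_add] using congrArg (fun p => p.coeff 2) hp
  have c1 : k1 = 0 := by simpa [Polynomial.coeff_X, Polynomial.coeff_C, -map_add] using congrArg (fun p => p.coeff 1) hp
  have c0 : k0 = 0 := by simpa [Polynomial.coeff_X, Polynomial.coeff_C, -map_add] using congrArg (fun p => p.coeff 0) hp
  have key : ∀ w : Fin 3 → K, H.mulVec w 1 ^ 2 - H.mulVec w 0 * H.mulVec w 2
      = c * (w 1 ^ 2 - w 0 * w 2) := by
    intro w
    simp only [mulVec, dotProduct, Fin.sum_univ_three]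
    linear_combination (w 2) ^ 2 * e2 + w 1 * w 2 * c3 + w 0 * w 2 * c2 + w 0 * w 1 * c1
      + w 0 ^ 2 * c0
  have hc0 : c ≠ 0 := by
    intro hc0
    have := key (H⁻¹.mulVec ![0, 1, 0])
    rw [mulVec_mulVec, Matrix.mul_nonsing_inv H hH, one_mulVec, hc0] at this
    simp at this
  have := key v
  simp only [mulVec, dotProduct, Fin.sum_univ_three] at this
  rw [hv] at this
  exact (mul_eq_zero.mp this.symm).resolve_left hc0

lemma algVec_mulVec {F K : Type} [Field F] [Field K] [Algebra F K] {m n : ℕ}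
    (W : Matrix (Fin m) (Fin n) F) (w : Fin n → F) :
    (algVec F (W.mulVec w) : Fin m → K) = (W.map (algebraMap F K)).mulVec (algVec F w) := by
  ext i
  simp [algVec, mulVec, dotProduct]

lemma exists_F_matrix {F K : Type} [Field F] [Field K] [Fintype F] [Algebra F K]
    (hq4 : 4 ≤ Fintype.card F) (G : Matrix (Fin 3) (Fin 3) K) (hG : IsUnit G.det)
    (h : ∀ v ∈ conicVecs (Set.range (algebraMap F K)),
      ∃ w : Fin 3 → F, ∃ μ : K, G.mulVec v = μ • algVec F w) :
    ∃ μ : K, μ ≠ 0 ∧ ∃ H : Matrix (Fin 3) (Fin 3) F, IsUnit H.det ∧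
      G = μ • H.map (algebraMap F K) := by
  obtain ⟨θ, hθ0, hθ1⟩ : ∃ θ : F, θ ≠ 0 ∧ θ ≠ 1 := by
    by_contra! hcon
    have : Finset.univ ⊆ ({0, 1} : Finset F) := by
      intro x _
      by_cases hx : x = 0
      · simp [hx]
      · simp [hcon x hx]
    have := Finset.card_le_card this
    have h2 : ({0, 1} : Finset F).card ≤ 2 := Finset.card_le_two
    rw [Finset.card_univ] at this
    omega
  obtain ⟨w0, l0, h0⟩ := h ![1, 0, 0] (Or.inl ⟨0, ⟨0, by simp⟩, by simp⟩)
  obtain ⟨w1, l1, h1⟩ := h ![1, 1, 1] (Or.inl ⟨1, ⟨1, by simp⟩, by simp⟩)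
  obtain ⟨w2, l2, h2⟩ := h ![0, 0, 1] (Or.inr rfl)
  obtain ⟨w, μ, hw⟩ := h ![1, algebraMap F K θ, (algebraMap F K θ) ^ 2]
    (Or.inl ⟨_, ⟨θ, rfl⟩, rfl⟩)
  set t := algebraMap F K θ with ht
  have ht0 : t ≠ 0 := by simpa [ht] using hθ0
  have ht1 : t - 1 ≠ 0 := by
    rw [sub_ne_zero]; intro h1; apply hθ1; apply (algebraMap F K).injective; rw [map_one]; exact h1
  let W : Matrix (Fin 3) (Fin 3) F := !![w0 0, w1 0, w2 0; w0 1, w1 1, w2 1; w0 2, w1 2, w2 2]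
  let E : Matrix (Fin 3) (Fin 3) K := !![l0, -l0, 0; 0, l1, 0; 0, -l2, l2]
  have e0 : ∀ i, G i 0 = l0 * algebraMap F K (w0 i) := by
    intro i; have := congrFun h0 i
    simpa [mulVec, dotProduct, Fin.sum_univ_three, algVec] using this
  have e2 : ∀ i, G i 2 = l2 * algebraMap F K (w2 i) := by
    intro i; have := congrFun h2 i
    simpa [mulVec, dotProduct, Fin.sum_univ_three, algVec] using this
  have e1 : ∀ i, G i 1 = l1 * algebraMap F K (w1 i) - l0 * algebraMap F K (w0 i)
      - l2 * algebraMap F K (w2 i) := by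
    intro i; have := congrFun h1 i
    simp [mulVec, dotProduct, Fin.sum_univ_three, algVec] at this
    rw [← e0, ← e2, ← this]; ring
  have hGE : G = W.map (algebraMap F K) * E := by
    ext i j
    fin_cases i <;> fin_cases j <;>
      simp [Matrix.mul_apply, Fin.sum_univ_three, W, E, e0, e1, e2] <;> ring
  have hWE : IsUnit (W.map (algebraMap F K)).det ∧ IsUnit E.det := by
    rw [hGE, det_mul] at hG
    exact ⟨isUnit_of_mul_isUnit_left hG, isUnit_of_mul_isUnit_right hG⟩
  have hWdet : IsUnit W.det := by
    have := hWE.1.ne_zero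
    rw [isUnit_iff_ne_zero]
    intro h0
    apply this
    have h3 := RingHom.map_det (algebraMap F K) W
    rw [h0, map_zero] at h3
    exact h3.symm
  set f := W⁻¹.mulVec w with hf
  have hWf : W.mulVec f = w := by
    rw [hf, mulVec_mulVec, Matrix.mul_nonsing_inv W hWdet, one_mulVec]
  have hEf : E.mulVec ![1, t, t ^ 2] = μ • algVec F f := by
    apply mulVec_inj _ hWE.1
    rw [mulVec_mulVec, ← hGE, hw, mulVec_smul, ← algVec_mulVec, hWf]
  have f0 : l0 * (1 - t) = μ * algebraMap F K (f 0) := by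
    have := congrFun hEf 0
    simp [mulVec, dotProduct, Fin.sum_univ_three, algVec, E] at this
    rw [← this]; ring
  have f1 : l1 * t = μ * algebraMap F K (f 1) := by
    have := congrFun hEf 1
    simpa [mulVec, dotProduct, Fin.sum_univ_three, algVec, E] using this
  have f2 : l2 * (t * (t - 1)) = μ * algebraMap F K (f 2) := by
    have := congrFun hEf 2
    simp [mulVec, dotProduct, Fin.sum_univ_three, algVec, E] at this
    rw [← this]; ring
  let g0 := f 0 / (1 - θ)
  let g1 := f 1 / θ
  let g2 := f 2 / (θ * (θ - 1))
  have ht1' : 1 - t ≠ 0 := by rw [← neg_sub]; exact neg_ne_zero.mpr ht1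
  have k0 : l0 = μ * algebraMap F K g0 := by
    simp only [g0, map_div₀, map_sub, map_one, ← ht]
    rw [← mul_div_assoc, eq_div_iff ht1', f0]
  have k1 : l1 = μ * algebraMap F K g1 := by
    simp only [g1, map_div₀, ← ht]
    rw [← mul_div_assoc, eq_div_iff ht0, f1]
  have k2 : l2 = μ * algebraMap F K g2 := by
    simp only [g2, map_div₀, map_sub, map_mul, map_one, ← ht]
    rw [← mul_div_assoc, eq_div_iff (mul_ne_zero ht0 ht1), f2]
  let E' : Matrix (Fin 3) (Fin 3) F := !![g0, -g0, 0; 0, g1, 0; 0, -g2, g2]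
  have hE : E = μ • E'.map (algebraMap F K) := by
    ext i j
    fin_cases i <;> fin_cases j <;> simp [E, E', k0, k1, k2]
  have hGH : G = μ • (W * E').map (algebraMap F K) := by
    rw [hGE, hE, Matrix.map_mul, Matrix.mul_smul]
  refine ⟨μ, ?_, W * E', ?_, hGH⟩
  · rintro rfl
    rw [hGH] at hG
    simp at hG
  · rw [isUnit_iff_ne_zero]
    intro h0
    have h3 := RingHom.map_det (algebraMap F K) (W * E')
    rw [h0, map_zero] at h3
    rw [hGH, det_smul] at hG
    apply hG.ne_zero
    rw [show ((W * E').map (algebraMap F K)).det = 0 from h3.symm, mul_zero]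

lemma row_over_F {F K : Type} [Field F] [Field K] [Algebra F K] (r : Fin 3 → K) (hr : r ≠ 0)
    (w w' : Fin 3 → F) (hw : r ⬝ᵥ algVec F w = 0) (hw' : r ⬝ᵥ algVec F w' = 0)
    (hli : LinearIndependent F ![w, w']) :
    ∃ ρ : K, ρ ≠ 0 ∧ ∃ s : Fin 3 → F, r = ρ • algVec F s := by
  rw [← crossProduct_ne_zero_iff_linearIndependent] at hli
  set s := crossProduct w w' with hs
  have s0 : s 0 = w 1 * w' 2 - w 2 * w' 1 := by simp [hs, cross_apply]
  have s1 : s 1 = w 2 * w' 0 - w 0 * w' 2 := by simp [hs, cross_apply]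
  have s2 : s 2 = w 0 * w' 1 - w 1 * w' 0 := by simp [hs, cross_apply]
  simp only [dotProduct, Fin.sum_univ_three, algVec] at hw hw'
  have hpar : ∀ i j, r i * algebraMap F K (s j) = r j * algebraMap F K (s i) := by
    have a : r 0 * algebraMap F K (s 1) = r 1 * algebraMap F K (s 0) := by
      rw [s0, s1]; simp only [map_sub, map_mul]
      linear_combination algebraMap F K (w 2) * hw' - algebraMap F K (w' 2) * hw
    have b : r 0 * algebraMap F K (s 2) = r 2 * algebraMap F K (s 0) := by
      rw [s0, s2]; simp only [map_sub, map_mul]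
      linear_combination -algebraMap F K (w 1) * hw' + algebraMap F K (w' 1) * hw
    have c : r 1 * algebraMap F K (s 2) = r 2 * algebraMap F K (s 1) := by
      rw [s1, s2]; simp only [map_sub, map_mul]
      linear_combination algebraMap F K (w 0) * hw' - algebraMap F K (w' 0) * hw
    intro i j
    fin_cases i <;> fin_cases j <;> first | rfl | exact a | exact b | exact c | exact a.symm | exact b.symm | exact c.symm
  obtain ⟨j, hj⟩ := Function.ne_iff.mp hli
  have hj' : algebraMap F K (s j) ≠ 0 := by simpa using hj
  have hre : r = (r j / algebraMap F K (s j)) • algVec F s := by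
    ext i
    simp only [Pi.smul_apply, algVec, smul_eq_mul]
    rw [div_mul_eq_mul_div, eq_div_iff hj', hpar i j]
  refine ⟨_, ?_, s, hre⟩
  intro h0
  rw [h0, zero_smul] at hre
  exact hr hre

lemma exists_two_vecs {F K : Type} [Field F] [Field K] [Fintype F] [Fintype K] [Algebra F K]
    (N : Matrix (Fin 3) (Fin 3) K)
    (hsec : 1 < (mimg N (subplaneVecs F K) ∩ linf K).ncard) :
    ∃ w w' : Fin 3 → F, N 2 ⬝ᵥ algVec F w = 0 ∧ N 2 ⬝ᵥ algVec F w' = 0 ∧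
      LinearIndependent F ![w, w'] := by
  have hfin : (mimg N (subplaneVecs F K) ∩ linf K).Finite := Set.finite_of_ncard_pos (by omega)
  rw [Set.one_lt_ncard_iff hfin] at hsec
  obtain ⟨a, b, ⟨⟨_, ⟨w, hw0, rfl⟩, hw, rfl⟩, ha⟩, ⟨⟨_, ⟨w', hw0', rfl⟩, hw', rfl⟩, hb⟩, hab⟩ := hsec
  rw [mk_mem_linf] at ha hb
  refine ⟨w, w', ha, hb, ?_⟩
  rw [LinearIndependent.pair_iff' hw0]
  intro c hc
  apply hab
  rw [eq_comm, Projectivization.mk_eq_mk_iff']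
  refine ⟨algebraMap F K c, ?_⟩
  rw [← mulVec_smul, ← hc]
  congr 1
  ext i
  simp [algVec]

lemma mimg_smul (M : Matrix (Fin m) (Fin n) K) (X : Set (Fin n → K)) {k : K} (hk : k ≠ 0) :
    mimg (k • M) X = mimg M X := by
  ext p
  rw [mem_mimg, mem_mimg]
  constructor
  · rintro ⟨v, hv, c, hc, h⟩
    refine ⟨v, hv, k⁻¹ * c, mul_ne_zero (inv_ne_zero hk) hc, ?_⟩
    rw [mul_smul, ← h, smul_mulVec, smul_smul, inv_mul_cancel₀ hk, one_smul]
  · rintro ⟨v, hv, c, hc, h⟩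
    refine ⟨v, hv, k * c, mul_ne_zero hk hc, ?_⟩
    rw [mul_smul, ← h, smul_mulVec]

lemma conic_ne_zero {S : Set K} {u : Fin 3 → K} (hu : u ∈ conicVecs S) : u ≠ 0 := by
  rcases hu with ⟨θ, _, rfl⟩ | h
  · intro h; have := congrFun h 0; simp at this
  · rw [Set.mem_singleton_iff.mp h]; intro h; have := congrFun h 2; simp at this

lemma mulVec_ne {M : Matrix (Fin n) (Fin n) K} (hM : IsUnit M.det) {u : Fin n → K} (hu : u ≠ 0) :
    M.mulVec u ≠ 0 := fun h => hu (mulVec_inj M hM (by rw [h, mulVec_zero]))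

lemma normal_form {F K : Type} [Field F] [Field K] [Fintype F] [Fintype K] [Algebra F K]
    (hq4 : 4 ≤ Fintype.card F)
    (B : Set (PP K 3)) (hB : IsBaerSubplane F B)
    (hsec : 1 < (B ∩ linf K).ncard)
    (C : Set (PP K 3)) (hC : IsFqConic F C) (hCB : C ⊆ B)
    (D : Set (PP K 3)) (hD : IsFq2Conic D) (hCD : C ⊆ D) :
    ∃ M : Matrix (Fin 3) (Fin 3) K, IsUnit M.det ∧
      C = mimg M (conicVecs (Set.range (algebraMap F K))) ∧
      B ⊆ mimg M (subplaneVecs F K) ∧ D ⊆ mimg M (conicVecs Set.univ) ∧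
      ∃ s : Fin 3 → F, ∀ j, M 2 j = algebraMap F K (s j) := by
  obtain ⟨N, hN, rfl⟩ := hB
  obtain ⟨M, hM, rfl⟩ := hC
  obtain ⟨M', hM', rfl⟩ := hD
  -- the Baer subplane
  have hG : IsUnit (N⁻¹ * M).det := by
    rw [det_mul]; exact (isUnit_nonsing_inv_det N hN).mul hM
  have hNG : N * (N⁻¹ * M) = M := by rw [← Matrix.mul_assoc, mul_nonsing_inv N hN, Matrix.one_mul]
  obtain ⟨μ, hμ, H, hH, hGH⟩ := exists_F_matrix (F := F) hq4 (N⁻¹ * M) hG (by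
    intro v hv
    have hv0 := mulVec_ne hM (conic_ne_zero hv)
    have h1 := hCB ((mk_mem_mimg hv0).mpr ⟨v, hv, 1, one_ne_zero, by simp⟩)
    rw [mk_mem_mimg] at h1
    obtain ⟨_, ⟨w, hw, rfl⟩, c, hc, h2⟩ := h1
    refine ⟨w, c⁻¹, ?_⟩
    apply mulVec_inj N hN
    rw [mulVec_mulVec, hNG, mulVec_smul, h2, smul_smul, inv_mul_cancel₀ hc, one_smul])
  obtain ⟨w, w', hw, hw', hli⟩ := exists_two_vecs N hsec
  have hN2 : N 2 ≠ 0 := by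
    intro h
    apply hN.ne_zero
    exact det_eq_zero_of_row_eq_zero 2 (fun j => congrFun h j)
  obtain ⟨ρ, hρ, r, hr⟩ := row_over_F (N 2) hN2 w w' hw hw' hli
  have hk : (ρ * μ)⁻¹ ≠ 0 := inv_ne_zero (mul_ne_zero hρ hμ)
  refine ⟨(ρ * μ)⁻¹ • M, ?_, (mimg_smul _ _ hk).symm, ?_, ?_, r ᵥ* H, ?_⟩
  · rw [det_smul]; exact (IsUnit.mk0 _ (pow_ne_zero _ hk)).mul hM
  · rw [mimg_smul _ _ hk]
    intro p hp
    rw [mem_mimg] at hp ⊢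
    obtain ⟨_, ⟨w, hw, rfl⟩, c, hc, h2⟩ := hp
    refine ⟨_, ⟨H⁻¹.mulVec w, mulVec_ne (isUnit_nonsing_inv_det H hH) hw, rfl⟩, μ * c,
      mul_ne_zero hμ hc, ?_⟩
    rw [mul_smul, ← h2, ← hNG, hGH, ← mulVec_mulVec, smul_mulVec, ← algVec_mulVec,
      mulVec_mulVec, mul_nonsing_inv H hH, one_mulVec, mulVec_smul]
  · rw [mimg_smul _ _ hk]
    have hJ : IsUnit (M'⁻¹ * M).det := by
      rw [det_mul]; exact (isUnit_nonsing_inv_det M' hM').mul hM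
    have hMJ : M' * (M'⁻¹ * M) = M := by
      rw [← Matrix.mul_assoc, mul_nonsing_inv M' hM', Matrix.one_mul]
    have hpb := form_pullback (F := F) hq4 (M'⁻¹ * M) hJ (by
      intro v hv
      have hv0 := mulVec_ne hM (conic_ne_zero hv)
      have h1 := hCD ((mk_mem_mimg hv0).mpr ⟨v, hv, 1, one_ne_zero, by simp⟩)
      rw [mk_mem_mimg] at h1
      obtain ⟨u, hu, c, hc, h2⟩ := h1
      have h3 : (M'⁻¹ * M).mulVec v = c⁻¹ • u := by
        apply mulVec_inj M' hM'
        rw [mulVec_mulVec, hMJ, mulVec_smul, h2, smul_smul, inv_mul_cancel₀ hc, one_smul]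
      have h4 := form_of_conic hu
      rw [h3]
      simp only [Pi.smul_apply, smul_eq_mul]
      linear_combination (c⁻¹) ^ 2 * h4)
    intro p hp
    rw [mem_mimg] at hp ⊢
    obtain ⟨u, hu, c, hc, h2⟩ := hp
    set v := (M'⁻¹ * M)⁻¹.mulVec u with hv
    have hJv : (M'⁻¹ * M).mulVec v = u := by
      rw [hv, mulVec_mulVec, mul_nonsing_inv _ hJ, one_mulVec]
    have hv0 : v ≠ 0 := mulVec_ne (isUnit_nonsing_inv_det _ hJ) (conic_ne_zero hu)
    obtain ⟨x, hx, d, hd, hvx⟩ := conic_zero_of_form hv0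
      (hpb v (by rw [hJv]; exact form_of_conic hu))
    refine ⟨x, hx, d⁻¹ * c, mul_ne_zero (inv_ne_zero hd) hc, ?_⟩
    rw [mul_smul, ← h2, ← hJv, mulVec_mulVec, hMJ, hvx, mulVec_smul, smul_smul,
      inv_mul_cancel₀ hd, one_smul]
  · intro j
    have h1 : M 2 j = (N * (N⁻¹ * M)) 2 j := by rw [hNG]
    rw [Matrix.smul_apply, h1, hGH, Matrix.mul_apply, smul_eq_mul]
    simp only [hr, Pi.smul_apply, Matrix.smul_apply, Matrix.map_apply, smul_eq_mul, algVec,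
      vecMul, dotProduct, map_sum, map_mul]
    rw [Finset.mul_sum]
    refine Finset.sum_congr rfl fun i _ => ?_
    field_simp

lemma frob_ne {F K : Type} [Field F] [Field K] [Fintype F] [Algebra F K]
    {x : K} (hx : x ∉ Set.range (algebraMap F K)) : x ^ Fintype.card F ≠ x := by
  intro h
  set q := Fintype.card F with hq
  have hq1 : 1 < q := Fintype.one_lt_card
  have hp : (Polynomial.X ^ q - Polynomial.X : Polynomial K) = 0 := by
    apply Polynomial.eq_zero_of_natDegree_lt_card_of_eval_eq_zero
      (f := fun o : Option F => o.elim x (algebraMap F K))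
    · rintro (_ | a) (_ | b) hab
      · rfl
      · exact absurd ⟨b, hab.symm⟩ hx
      · exact absurd ⟨a, hab⟩ hx
      · exact congrArg some ((algebraMap F K).injective hab)
    · rintro (_ | a)
      · simp [h]
      · simp [← map_pow, hq, FiniteField.pow_card]
    · rw [FiniteField.X_pow_card_sub_X_natDegree_eq K hq1, Fintype.card_option]
      omega
  exact FiniteField.X_pow_card_sub_X_ne_zero K hq1 hp

/-! ### The Bruck–Bose matrix -/

/-- The matrix of the Bruck-Bose image of the conic. -/
def bbMat {F K : Type} [Field F] [Field K] (c0 c1 : K → F) (M : Matrix (Fin 3) (Fin 3) K)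
    (s : Fin 3 → F) : Matrix (Fin 5) (Fin 3) F :=
  Matrix.of ![fun j => c0 (M 0 j), fun j => c1 (M 0 j), fun j => c0 (M 1 j),
    fun j => c1 (M 1 j), s]

lemma coords_unique {F K : Type} [Field F] [Field K] [Algebra F K] {τ : K}
    (hτF : τ ∉ Set.range (algebraMap F K)) {a b a' b' : F}
    (h : algebraMap F K a + algebraMap F K b * τ = algebraMap F K a' + algebraMap F K b' * τ) :
    a = a' ∧ b = b' := by
  have hb : b = b' := by
    by_contra hne
    apply hτF
    have h1 : algebraMap F K b - algebraMap F K b' ≠ 0 := by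
      rw [← map_sub]; simpa [sub_eq_zero] using hne
    refine ⟨(a' - a) / (b - b'), ?_⟩
    rw [map_div₀, map_sub, map_sub, div_eq_iff h1]
    linear_combination -h
  subst hb
  exact ⟨(algebraMap F K).injective (by linear_combination h), rfl⟩

section
variable {F K : Type} [Field F] [Field K] [Algebra F K] {τ : K} {c0 c1 : K → F}
  {M : Matrix (Fin 3) (Fin 3) K} {s : Fin 3 → F}

lemma bbMat_rel0 (hc : ∀ x : K, x = algebraMap F K (c0 x) + algebraMap F K (c1 x) * τ)
    (u : Fin 3 → K) :
    ((bbMat c0 c1 M s).map (algebraMap F K)).mulVec u 0 +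
      τ * ((bbMat c0 c1 M s).map (algebraMap F K)).mulVec u 1 = M.mulVec u 0 := by
  simp only [mulVec, dotProduct, Fin.sum_univ_three, Matrix.map_apply, bbMat, Matrix.of_apply,
    cons_val_zero, cons_val_one, cons_val]
  linear_combination -u 0 * hc (M 0 0) - u 1 * hc (M 0 1) - u 2 * hc (M 0 2)

lemma bbMat_rel1 (hc : ∀ x : K, x = algebraMap F K (c0 x) + algebraMap F K (c1 x) * τ)
    (u : Fin 3 → K) :
    ((bbMat c0 c1 M s).map (algebraMap F K)).mulVec u 2 +
      τ * ((bbMat c0 c1 M s).map (algebraMap F K)).mulVec u 3 = M.mulVec u 1 := by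
  simp only [mulVec, dotProduct, Fin.sum_univ_three, Matrix.map_apply, bbMat, Matrix.of_apply,
    cons_val_zero, cons_val_one, cons_val]
  linear_combination -u 0 * hc (M 1 0) - u 1 * hc (M 1 1) - u 2 * hc (M 1 2)

lemma bbMat_rel2 (hs : ∀ j, M 2 j = algebraMap F K (s j)) (u : Fin 3 → K) :
    ((bbMat c0 c1 M s).map (algebraMap F K)).mulVec u 4 = M.mulVec u 2 := by
  simp only [mulVec, dotProduct, Fin.sum_univ_three, Matrix.map_apply, bbMat, Matrix.of_apply,
    cons_val, hs]

lemma bbMat_ne (hc : ∀ x : K, x = algebraMap F K (c0 x) + algebraMap F K (c1 x) * τ)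
    (hs : ∀ j, M 2 j = algebraMap F K (s j)) (hM : IsUnit M.det) {u : Fin 3 → K} (hu : u ≠ 0) :
    ((bbMat c0 c1 M s).map (algebraMap F K)).mulVec u ≠ 0 := by
  intro h
  apply mulVec_ne hM hu
  have h0 := bbMat_rel0 (M := M) (s := s) hc u
  have h1 := bbMat_rel1 (M := M) (s := s) hc u
  have h2 := bbMat_rel2 (M := M) (s := s) (c0 := c0) (c1 := c1) hs u
  rw [h] at h0 h1 h2
  ext i
  fin_cases i
  · simpa using h0.symm
  · simpa using h1.symm
  · simpa using h2.symm

lemma algVec_eq_zero {n : ℕ} {u : Fin n → F} : (algVec F u : Fin n → K) = 0 ↔ u = 0 := by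
  constructor
  · intro h; ext i; have := congrFun h i; simpa [algVec] using this
  · rintro rfl; ext i; simp [algVec]

lemma bbMat_neF (hc : ∀ x : K, x = algebraMap F K (c0 x) + algebraMap F K (c1 x) * τ)
    (hs : ∀ j, M 2 j = algebraMap F K (s j)) (hM : IsUnit M.det) {u : Fin 3 → F} (hu : u ≠ 0) :
    (bbMat c0 c1 M s).mulVec u ≠ 0 := by
  intro h
  apply bbMat_ne hc hs hM (u := algVec F u) (by rwa [Ne, algVec_eq_zero])
  rw [← algVec_mulVec, h, algVec_eq_zero]

lemma bb_mk (hτF : τ ∉ Set.range (algebraMap F K))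
    (hc : ∀ x : K, x = algebraMap F K (c0 x) + algebraMap F K (c1 x) * τ)
    (hs : ∀ j, M 2 j = algebraMap F K (s j)) {u : Fin 3 → F}
    (h1 : M.mulVec (algVec F u) ≠ 0) (h2 : (bbMat c0 c1 M s).mulVec u ≠ 0)
    (h3 : M.mulVec (algVec F u) 2 ≠ 0) :
    bb c0 c1 (Projectivization.mk K _ h1) = Projectivization.mk F _ h2 := by
  obtain ⟨k, hk, hrep⟩ := rep_mk h1
  set m := (bbMat c0 c1 M s).mulVec u with hm
  have hmK : ∀ i, ((bbMat c0 c1 M s).map (algebraMap F K)).mulVec (algVec F u) i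
      = algebraMap F K (m i) := by
    intro i; rw [← algVec_mulVec]; rfl
  have r0 := bbMat_rel0 (M := M) (s := s) hc (algVec F u)
  have r1 := bbMat_rel1 (M := M) (s := s) hc (algVec F u)
  have r2 := bbMat_rel2 (M := M) (s := s) (c0 := c0) (c1 := c1) hs (algVec F u)
  rw [hmK, hmK] at r0 r1
  rw [hmK] at r2
  have hm4 : algebraMap F K (m 4) ≠ 0 := by rwa [r2]
  have hm4' : m 4 ≠ 0 := by simpa using hm4
  have key : ∀ i (a b : F), algebraMap F K a + τ * algebraMap F K b = M.mulVec (algVec F u) i →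
      c0 ((Projectivization.mk K _ h1).rep i / (Projectivization.mk K _ h1).rep 2) = (m 4)⁻¹ * a ∧
      c1 ((Projectivization.mk K _ h1).rep i / (Projectivization.mk K _ h1).rep 2) = (m 4)⁻¹ * b := by
    intro i a b hab
    apply coords_unique hτF
    rw [← hc, hrep]
    simp only [Pi.smul_apply, smul_eq_mul, map_mul, map_inv₀]
    rw [mul_div_mul_left _ _ hk, ← r2, ← hab]
    field_simp
  unfold bb
  rw [Projectivization.mk_eq_mk_iff']
  refine ⟨(m 4)⁻¹, ?_⟩
  rw [← hm]
  have k0 := key 0 _ _ r0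
  have k1 := key 1 _ _ r1
  ext i
  fin_cases i
  · simp [bbVec, k0]
  · simp [bbVec, k0]
  · simp [bbVec, k1]
  · simp [bbVec, k1]
  · simp [bbVec, hm4']

end

lemma ext_point {τ : K} {q : ℕ} (hq0 : q ≠ 0) (hτq : τ ^ q ≠ τ) (t t' : Option K)
    {m : Fin 5 → K} {a b : K}
    (h0 : m 0 + τ * m 1 = a * ptInfVec t 0) (h1 : m 2 + τ * m 3 = a * ptInfVec t 1)
    (h0' : m 0 + τ ^ q * m 1 = b * ptInfVec t' 0 ^ q)
    (h1' : m 2 + τ ^ q * m 3 = b * ptInfVec t' 1 ^ q)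
    (h4 : m 4 = 0) :
    (a / (τ ^ q - τ)) • gptVec τ q t + (-b / (τ ^ q - τ)) • gqptVec τ q t' = m := by
  have hd : τ ^ q - τ ≠ 0 := sub_ne_zero.mpr hτq
  have e : ∀ i, gptVec τ q t i = ![τ ^ q * ptInfVec t 0, -ptInfVec t 0, τ ^ q * ptInfVec t 1,
      -ptInfVec t 1, 0] i := by
    intro i
    cases t <;> fin_cases i <;> simp [gptVec, ptInfVec, A0v, A1v] <;> ring
  have e' : ∀ i, gqptVec τ q t' i = ![τ * ptInfVec t' 0 ^ q, -ptInfVec t' 0 ^ q,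
      τ * ptInfVec t' 1 ^ q, -ptInfVec t' 1 ^ q, 0] i := by
    intro i
    cases t' <;> fin_cases i <;> simp [gqptVec, ptInfVec, B0v, B1v, hq0] <;> ring
  ext i
  rw [Pi.add_apply, Pi.smul_apply, Pi.smul_apply, e, e', smul_eq_mul, smul_eq_mul]
  fin_cases i
  · simp; field_simp; linear_combination -τ ^ q * h0 + τ * h0'
  · simp; field_simp; linear_combination h0 - h0'
  · simp; field_simp; linear_combination -τ ^ q * h1 + τ * h1'
  · simp; field_simp; linear_combination h1 - h1'
  · simp [h4]

lemma ext_unique {τ : K} {q : ℕ} (hq0 : q ≠ 0) (t t' : Option K)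
    {m : Fin 5 → K} {a b c d : K} (hb : b ≠ 0) (hm : c • gptVec τ q t + d • gqptVec τ q t' = m)
    (h0 : m 0 + τ * m 1 = b * ptInfVec t' 0) (h1 : m 2 + τ * m 3 = b * ptInfVec t' 1) :
    ptInf t = ptInf t' := by
  subst hm
  unfold ptInf
  rw [eq_comm, Projectivization.mk_eq_mk_iff']
  refine ⟨c * (τ ^ q - τ) / b, ?_⟩
  ext i
  rw [Pi.smul_apply, smul_eq_mul, div_mul_eq_mul_div, div_eq_iff hb]
  fin_cases i
  · simp only [Fin.zero_eta]
    rw [mul_comm _ b, ← h0]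
    cases t <;> cases t' <;> simp [gptVec, gqptVec, ptInfVec, A0v, A1v, B0v, B1v] <;> ring
  · simp only [Fin.mk_one]
    rw [mul_comm _ b, ← h1]
    cases t <;> cases t' <;> simp [gptVec, gqptVec, ptInfVec, A0v, A1v, B0v, B1v] <;> ring
  · cases t <;> cases t' <;> simp [ptInfVec]

lemma line_meet {F K : Type} [Field F] [Field K] [Fintype F] [Fintype K] [Algebra F K]
    {τ : K} {c0 c1 : K → F} {M : Matrix (Fin 3) (Fin 3) K} {s : Fin 3 → F}
    (q : ℕ) (hq : Fintype.card F = q)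
    (hτF : τ ∉ Set.range (algebraMap F K))
    (hc : ∀ x : K, x = algebraMap F K (c0 x) + algebraMap F K (c1 x) * τ)
    (hs : ∀ j, M 2 j = algebraMap F K (s j)) (hM : IsUnit M.det)
    (hs2 : s 2 ≠ 0) (t t' : Option K) (hne : ptInf t ≠ ptInf t')
    (θ θ' : K) (hθ' : θ' = θ ^ q) (hθ : θ = θ' ^ q) (hθθ' : θ ≠ θ') {a b : K} (hb : b ≠ 0)
    (hP : M.mulVec ![1, θ, θ ^ 2] = a • ptInfVec t)
    (hQ : M.mulVec ![1, θ', θ' ^ 2] = b • ptInfVec t') :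
    (mimg ((bbMat c0 c1 M s).map (algebraMap F K)) (conicVecs (Set.univ : Set K)) ∩
        lineTh (gpt τ q t) (gqpt τ q t')).ncard = 1 := by
  have hq0 : q ≠ 0 := by rw [← hq]; exact Fintype.card_ne_zero
  have hτq : τ ^ q ≠ τ := by rw [← hq]; exact frob_ne hτF
  have hu : (![1, θ, θ ^ 2] : Fin 3 → K) ∈ conicVecs (Set.univ : Set K) :=
    Or.inl ⟨θ, trivial, rfl⟩
  set N := (bbMat c0 c1 M s).map (algebraMap F K) with hN
  have hroot : ∀ (x e : K) (o : Option K), M.mulVec ![1, x, x ^ 2] = e • ptInfVec o →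
      algebraMap F K (s 0) + algebraMap F K (s 1) * x + algebraMap F K (s 2) * x ^ 2 = 0 := by
    intro x e o h
    have h2 := congrFun h 2
    simp only [mulVec, dotProduct, Fin.sum_univ_three, hs] at h2
    cases o <;> simpa [ptInfVec] using h2
  have hs2' : algebraMap F K (s 2) ≠ 0 := by simpa using hs2
  have rθ := hroot θ a t hP
  have rθ' := hroot θ' b t' hQ
  have hz : ∀ o : Option K, ptInfVec o 2 = 0 := by intro o; cases o <;> simp [ptInfVec]
  have hne0 := bbMat_ne (c0 := c0) (c1 := c1) hc hs hM (conic_ne_zero hu)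
  rw [Set.ncard_eq_one]
  refine ⟨Projectivization.mk K _ hne0, ?_⟩
  ext p
  rw [Set.mem_singleton_iff]
  constructor
  · rintro ⟨⟨v, hv, hv0, rfl⟩, hp⟩
    unfold gpt gqpt at hp
    rw [mk_mem_lineTh] at hp
    obtain ⟨c, d, hcd⟩ := hp
    have h4 : N.mulVec v 4 = 0 := by
      rw [← hcd]
      cases t <;> cases t' <;> simp [gptVec, gqptVec, A0v, A1v, B0v, B1v]
    rw [hN, bbMat_rel2 hs] at h4
    simp only [mulVec, dotProduct, Fin.sum_univ_three, hs] at h4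
    rcases hv with ⟨x, _, rfl⟩ | hv
    · simp only [cons_val_zero, cons_val_one, cons_val] at h4
      have hx : (x - θ) * (x - θ') = 0 := by
        have hd : θ - θ' ≠ 0 := sub_ne_zero.mpr hθθ'
        have h1 : algebraMap F K (s 1) = -(algebraMap F K (s 2)) * (θ + θ') := by
          apply mul_left_cancel₀ hd
          linear_combination rθ - rθ'
        apply mul_left_cancel₀ hs2'
        rw [h1] at h4 rθ
        linear_combination h4 - rθ
      rcases mul_eq_zero.mp hx with hx | hx
      · rw [sub_eq_zero] at hx
        subst hx
        rfl
      · rw [sub_eq_zero] at hx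
        subst hx
        exfalso
        apply hne
        refine ext_unique (a := 0) hq0 t t' hb hcd ?_ ?_
        · rw [hN, bbMat_rel0 hc, hQ]; rfl
        · rw [hN, bbMat_rel1 hc, hQ]; rfl
    · rw [Set.mem_singleton_iff.mp hv] at h4
      simp at h4
      exact absurd h4 hs2
  · rintro rfl
    refine ⟨(mk_mem_mimg hne0).mpr ⟨_, hu, 1, one_ne_zero, by simp [hN]⟩, ?_⟩
    unfold gpt gqpt
    rw [mk_mem_lineTh]
    have hσ : ∀ i, N.mulVec ![1, θ, θ ^ 2] i = (N.mulVec ![1, θ', θ' ^ 2] i) ^ q := by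
      intro i
      have hF : ∀ x : K, x ^ q = FiniteField.frobeniusAlgHom F K x := by
        intro x; rw [FiniteField.coe_frobeniusAlgHom, hq]
      rw [hF] at hθ ⊢
      simp only [mulVec, dotProduct, Fin.sum_univ_three, hN, Matrix.map_apply, map_add, map_mul,
        AlgHom.commutes, cons_val_zero, cons_val_one, cons_val, map_one, map_pow, ← hθ]
    have hadd : ∀ x y : K, (x + τ * y) ^ q = x ^ q + τ ^ q * y ^ q := by
      intro x y
      have hF : ∀ x : K, x ^ q = FiniteField.frobeniusAlgHom F K x := by
        intro x; rw [FiniteField.coe_frobeniusAlgHom, hq]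
      simp only [hF, map_add, map_mul]
    refine ⟨_, _, ext_point (b := b ^ q) (a := a) hq0 hτq t t' ?_ ?_ ?_ ?_ ?_⟩
    · rw [bbMat_rel0 hc, hP]; rfl
    · rw [bbMat_rel1 hc, hP]; rfl
    · rw [← hN, hσ, hσ, ← hadd, hN, bbMat_rel0 hc, hQ, ← mul_pow]; rfl
    · rw [← hN, hσ, hσ, ← hadd, hN, bbMat_rel1 hc, hQ, ← mul_pow]; rfl
    · rw [bbMat_rel2 hs, hP, Pi.smul_apply, hz, smul_zero]

/-- An `F_q`-conic `C`, disjoint from `ℓ∞`, in a Baer subplane `B` secant to `ℓ∞`, whose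
`F_{q²}`-extension meets `ℓ∞` in two distinct points `P̄, Q̄`, corresponds in `PG(4,q)` to
a nondegenerate conic in the plane `[B]`, disjoint from `Σ∞`, whose extension meets each
of the lines `PQ^q` and `P^qQ` in exactly one point (i.e. it is a `(PQ^q)`-special
conic). -/
theorem statement_15
    {F K : Type} [Field F] [Field K] [Fintype F] [Fintype K] [Algebra F K]
    (q : ℕ) (hq : Fintype.card F = q) (hK : Fintype.card K = q ^ 2)
    (τ : K) (t0 t1 : F)
    (hτ : τ ^ 2 = algebraMap F K t1 * τ + algebraMap F K t0)
    (hτF : τ ∉ Set.range (algebraMap F K))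
    (c0 c1 : K → F)
    (hc : ∀ x : K, x = algebraMap F K (c0 x) + algebraMap F K (c1 x) * τ)
    (hq4 : 4 ≤ q)
    (B : Set (PP K 3)) (hB : IsBaerSubplane F B)
    (hsec : (B ∩ linf K).ncard = q + 1)
    (C : Set (PP K 3)) (hC : IsFqConic F C) (hCB : C ⊆ B) (hCaff : C ∩ linf K = ∅)
    (D : Set (PP K 3)) (hD : IsFq2Conic D) (hCD : C ⊆ D)
    (tP tQ : Option K) (hne : ptInf tP ≠ ptInf tQ)
    (hDinf : D ∩ linf K = {ptInf tP, ptInf tQ})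
    (Wsub : Submodule F (Fin 5 → F)) (hW3 : Module.finrank F Wsub = 3)
    (hWns : ¬ ptsOf Wsub ⊆ sinf F)
    (halpha : bb c0 c1 '' (B \ linf K) = ptsOf Wsub \ sinf F) :
    ptInf tP ∉ B ∧ ptInf tQ ∉ B ∧
    ∃ M3 : Matrix (Fin 5) (Fin 3) F, Function.Injective M3.mulVec ∧
      mimg M3 (conicVecs (Set.univ : Set F)) = bb c0 c1 '' C ∧
      mimg M3 (conicVecs (Set.univ : Set F)) ⊆ ptsOf Wsub ∧
      mimg M3 (conicVecs (Set.univ : Set F)) ∩ sinf F = ∅ ∧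
      (mimg (M3.map (algebraMap F K)) (conicVecs (Set.univ : Set K)) ∩
        lineTh (gpt τ q tP) (gqpt τ q tQ)).ncard = 1 ∧
      (mimg (M3.map (algebraMap F K)) (conicVecs (Set.univ : Set K)) ∩
        lineTh (gqpt τ q tP) (gpt τ q tQ)).ncard = 1 := by
  obtain ⟨M, hM, rfl, hBM, hDM, s, hs⟩ := normal_form (F := F) (by omega) B hB (by omega) C hC hCB
    D hD hCD
  have haff : ∀ u ∈ conicVecs (Set.univ : Set F), M.mulVec (algVec F u) 2 ≠ 0 := by
    intro u hu h0
    have hu0 : (algVec F u : Fin 3 → K) ≠ 0 := by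
      rw [Ne, algVec_eq_zero]; exact conic_ne_zero hu
    have hmem : Projectivization.mk K _ (mulVec_ne hM hu0) ∈
        mimg M (conicVecs (Set.range (algebraMap F K))) ∩ linf K := by
      refine ⟨(mk_mem_mimg _).mpr ⟨algVec F u, ?_, 1, one_ne_zero, by simp⟩,
        (mk_mem_linf _).mpr h0⟩
      rw [conicVecs_range]; exact ⟨u, hu, rfl⟩
    rw [hCaff] at hmem
    exact hmem
  have hs2 : s 2 ≠ 0 := by
    intro h
    apply haff ![0, 0, 1] (Or.inr rfl)
    simp [mulVec, dotProduct, Fin.sum_univ_three, hs, algVec, h]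
  have hs2' : algebraMap F K (s 2) ≠ 0 := by simpa using hs2
  have hF : ∀ x : K, x ^ q = FiniteField.frobeniusAlgHom F K x := by
    intro x; rw [FiniteField.coe_frobeniusAlgHom, hq]
  have hz : ∀ o : Option K, ptInfVec o 2 = 0 := by intro o; cases o <;> simp [ptInfVec]
  have hpt : ∀ o : Option K, ptInf o ∈ D → ∃ θ : K, θ ∉ Set.range (algebraMap F K) ∧
      (algebraMap F K (s 0) + algebraMap F K (s 1) * θ + algebraMap F K (s 2) * θ ^ 2 = 0) ∧
      ∃ a : K, a ≠ 0 ∧ M.mulVec ![1, θ, θ ^ 2] = a • ptInfVec o := by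
    intro o ho
    have h1 := hDM ho
    unfold ptInf at h1
    rw [mk_mem_mimg] at h1
    obtain ⟨u, hu, a, ha, h2⟩ := h1
    have h3 : M.mulVec u 2 = 0 := by rw [h2, Pi.smul_apply, hz, smul_zero]
    rcases hu with ⟨θ, _, rfl⟩ | hu
    · refine ⟨θ, ?_, ?_, a, ha, h2⟩
      · rintro ⟨x, rfl⟩
        apply haff ![1, x, x ^ 2] (Or.inl ⟨x, trivial, rfl⟩)
        convert h3 using 3
        ext i
        fin_cases i <;> simp [algVec]
      · simpa [mulVec, dotProduct, Fin.sum_univ_three, hs] using h3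
    · rw [Set.mem_singleton_iff.mp hu] at h3
      simp [mulVec, dotProduct, Fin.sum_univ_three, hs] at h3
      exact absurd h3 hs2
  have hnB : ∀ o : Option K, ptInf o ∈ D → ptInf o ∉ B := by
    intro o ho hoB
    obtain ⟨θ, hθ, -, a, ha, hMθ⟩ := hpt o ho
    have h1 := hBM hoB
    unfold ptInf at h1
    rw [mk_mem_mimg] at h1
    obtain ⟨_, ⟨w, hw, rfl⟩, c, hc', h2⟩ := h1
    have h3 : algVec F w = (c / a) • ![1, θ, θ ^ 2] := by
      apply mulVec_inj M hM
      rw [h2, mulVec_smul, hMθ, smul_smul, div_mul_cancel₀ _ ha]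
    have e0 := congrFun h3 0
    have e1 := congrFun h3 1
    simp only [algVec, Pi.smul_apply, smul_eq_mul, cons_val_zero, cons_val_one, mul_one] at e0 e1
    apply hθ
    refine ⟨w 1 / w 0, ?_⟩
    rw [map_div₀, e1, e0]
    field_simp
  have hPD : ptInf tP ∈ D := by
    have : ptInf tP ∈ D ∩ linf K := by rw [hDinf]; simp
    exact this.1
  have hQD : ptInf tQ ∈ D := by
    have : ptInf tQ ∈ D ∩ linf K := by rw [hDinf]; simp
    exact this.1
  obtain ⟨θ, hθF, hθr, a, ha, hP⟩ := hpt tP hPD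
  obtain ⟨θ', hθF', hθr', b, hb, hQ⟩ := hpt tQ hQD
  have hθθ' : θ ≠ θ' := by
    rintro rfl
    apply hne
    unfold ptInf
    rw [Projectivization.mk_eq_mk_iff']
    refine ⟨b / a, ?_⟩
    rw [div_eq_inv_mul, mul_smul, ← hQ, hP, smul_smul, inv_mul_cancel₀ ha, one_smul]
  have hθq : θ' = θ ^ q := by
    have hne' : θ ^ q - θ ≠ 0 := by
      rw [sub_ne_zero, ← hq]; exact frob_ne hθF
    have hr : algebraMap F K (s 0) + algebraMap F K (s 1) * θ ^ q
        + algebraMap F K (s 2) * (θ ^ q) ^ 2 = 0 := by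
      have := congrArg (FiniteField.frobeniusAlgHom F K) hθr
      simp only [map_add, map_mul, AlgHom.commutes, map_pow, map_zero] at this
      rw [hF]
      exact this
    have h1 : algebraMap F K (s 1) + algebraMap F K (s 2) * (θ ^ q + θ) = 0 := by
      apply (mul_eq_zero.mp (_ : (θ ^ q - θ) * _ = 0)).resolve_left hne'
      linear_combination hr - hθr
    have h2 : algebraMap F K (s 1) + algebraMap F K (s 2) * (θ' + θ) = 0 := by
      apply (mul_eq_zero.mp (_ : (θ' - θ) * _ = 0)).resolve_left (sub_ne_zero.mpr hθθ'.symm)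
      linear_combination hθr' - hθr
    apply mul_left_cancel₀ hs2'
    linear_combination h2 - h1
  have hθq' : θ = θ' ^ q := by
    rw [hθq, ← pow_mul, ← pow_two, ← hK, FiniteField.pow_card]
  have himg : mimg (bbMat c0 c1 M s) (conicVecs (Set.univ : Set F)) =
      bb c0 c1 '' mimg M (conicVecs (Set.range (algebraMap F K))) := by
    ext p
    constructor
    · rintro ⟨u, hu, h0, rfl⟩
      have hu0 : (algVec F u : Fin 3 → K) ≠ 0 := by
        rw [Ne, algVec_eq_zero]; exact conic_ne_zero hu
      refine ⟨Projectivization.mk K _ (mulVec_ne hM hu0), ?_,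
        bb_mk hτF hc hs _ h0 (haff u hu)⟩
      refine (mk_mem_mimg _).mpr ⟨algVec F u, ?_, 1, one_ne_zero, by simp⟩
      rw [conicVecs_range]; exact ⟨u, hu, rfl⟩
    · rintro ⟨_, ⟨v, hv, h0, rfl⟩, rfl⟩
      rw [conicVecs_range] at hv
      obtain ⟨u, hu, rfl⟩ := hv
      have hne0 := bbMat_neF (c0 := c0) (c1 := c1) hc hs hM (conic_ne_zero hu)
      exact ⟨u, hu, hne0, bb_mk hτF hc hs h0 hne0 (haff u hu)⟩
  have hsub : bb c0 c1 '' mimg M (conicVecs (Set.range (algebraMap F K))) ⊆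
      ptsOf Wsub \ sinf F := by
    rw [← halpha]
    apply Set.image_mono
    intro x hx
    refine ⟨hCB hx, fun h => ?_⟩
    have : x ∈ mimg M (conicVecs (Set.range (algebraMap F K))) ∩ linf K := ⟨hx, h⟩
    rw [hCaff] at this
    exact this
  refine ⟨hnB _ hPD, hnB _ hQD, bbMat c0 c1 M s, ?_, himg, ?_, ?_, ?_, ?_⟩
  · intro x y hxy
    by_contra hne'
    apply bbMat_neF (c0 := c0) (c1 := c1) hc hs hM (sub_ne_zero.mpr hne')
    rw [mulVec_sub]
    exact sub_eq_zero.mpr hxy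
  · rw [himg]; exact fun p hp => (hsub hp).1
  · rw [himg]
    ext p
    simp only [Set.mem_inter_iff, Set.mem_empty_iff_false, iff_false, not_and]
    exact fun hp => (hsub hp).2
  · exact line_meet q hq hτF hc hs hM hs2 tP tQ hne θ θ' hθq hθq' hθθ' hb hP hQ
  · have hcomm : lineTh (gqpt τ q tP) (gpt τ q tQ) = lineTh (gpt τ q tQ) (gqpt τ q tP) := by
      unfold lineTh; rw [Set.pair_comm]
    rw [hcomm]
    exact line_meet q hq hτF hc hs hM hs2 tQ tP hne.symm θ' θ hθq' hθq hθθ'.symm ha hQ hP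

end BaerConics
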